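/- Let V be a real vector space, K ⊆ V a convex set, and E ⊆ K a subset. The following are equivalent: (1) E is an extreme subset of K; (2) E contains the face F_K(x) generated by each point x ∈ E; (3) E is a union of faces of K each having nonempty relative algebraic interior; (4) E is a union of faces of K. -/

import Mathlib

variable {V : Type*} [AddCommGroup V] [Module ℝ V]

/-- `E` is an extreme subset of `K`: whenever a point of `E` is written as
`(1-l)•y + l•z` with `y, z ∈ K` and `l ∈ (0,1)`, both `y` and `z` lie in `E`. -/
def IsExtremeSubset (K E : Set V) : Prop :=
  E ⊆ K ∧ ∀ x ∈ E, ∀ y ∈ K, ∀ z ∈ K, ∀ l : ℝ, l ∈ Set.Ioo (0:ℝ) 1 →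
    x = (1 - l) • y + l • z → y ∈ E ∧ z ∈ E

/-- `F` is a face of `K`: a convex extreme subset of `K`. -/
def IsFaceOf (K F : Set V) : Prop := Convex ℝ F ∧ IsExtremeSubset K F

/-- The face of `K` generated by `x`: the smallest face of `K` containing `x`
(the intersection of all faces of `K` containing `x`). -/
def genFace (K : Set V) (x : V) : Set V := ⋂₀ {F | IsFaceOf K F ∧ x ∈ F}

/-- The relative algebraic interior of `C`: all `x ∈ C` such that for every
`y` in the affine hull of `C` there is `ε > 0` with `x ± ε(y - x) ∈ C`. -/
def riSet (C : Set V) : Set V :=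
  {x | x ∈ C ∧ ∀ y ∈ affineSpan ℝ C, ∃ ε : ℝ, 0 < ε ∧
    x + ε • (y - x) ∈ C ∧ x - ε • (y - x) ∈ C}

/-!
Let `C` be the convex cone of directions in which one can leave `x ∈ K` while staying in `K`.
The face generated by `x` is `K ∩ (x - C)`: the points `y` of `K` for which the segment from `y` to
`x` can be prolonged beyond `x` inside `K`. The differences `y - x` of such points lie in the
lineality space of `C`, and from `x` one can move both ways along each direction of that space
without leaving the face, so `x` is a relative algebraic interior point of the face it generates.
An extreme set contains the face generated by each of its points, hence is the union of these faces;
conversely, any union of extreme sets is extreme.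
-/

section FeasibleCone

open scoped Pointwise

variable {𝕜 M : Type*} [Field 𝕜] [LinearOrder 𝕜] [IsStrictOrderedRing 𝕜]
  [AddCommGroup M] [Module 𝕜 M] {s E : Set M} {x y v : M}

theorem mem_pointedCone_hull_iff_of_convex (hs : Convex 𝕜 s) (h0 : 0 ∈ s) :
    v ∈ PointedCone.hull 𝕜 s ↔ ∃ ε : 𝕜, 0 < ε ∧ ε • v ∈ s := by
  constructor
  · intro hv
    have hle : PointedCone.hull 𝕜 s ≤
        (ConvexCone.hull 𝕜 s).toPointedCone (ConvexCone.subset_hull h0) :=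
      Submodule.span_le.2 ConvexCone.subset_hull
    obtain ⟨r, hr, hvr⟩ := (ConvexCone.mem_hull_of_convex hs).1 (hle hv)
    exact ⟨r⁻¹, inv_pos.2 hr, (Set.mem_smul_set_iff_inv_smul_mem₀ hr.ne' s v).1 hvr⟩
  · rintro ⟨ε, hε, hv⟩
    rw [← inv_smul_smul₀ hε.ne' v]
    exact PointedCone.smul_mem _ (inv_pos.2 hε).le (PointedCone.subset_hull hv)

variable (𝕜 s x) in
/-- The cone of feasible directions of `s` at `x`, generated by the differences `y - x` for `y ∈ s`.
For a convex `s` containing `x` it consists of the directions in which one can leave `x` while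
staying in `s`, see `mem_feasibleCone_iff`. -/
def feasibleCone : PointedCone 𝕜 M := PointedCone.hull 𝕜 (-x +ᵥ s)

theorem sub_mem_feasibleCone (hy : y ∈ s) : y - x ∈ feasibleCone 𝕜 s x :=
  PointedCone.subset_hull ⟨y, hy, neg_add_eq_sub x y⟩

theorem mem_feasibleCone_iff (hs : Convex 𝕜 s) (hx : x ∈ s) :
    v ∈ feasibleCone 𝕜 s x ↔ ∃ ε : 𝕜, 0 < ε ∧ x + ε • v ∈ s := by
  have h0 : (0 : M) ∈ -x +ᵥ s := ⟨x, hx, neg_add_cancel x⟩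
  simp only [feasibleCone, mem_pointedCone_hull_iff_of_convex (hs.vadd (-x)) h0,
    Set.mem_vadd_set_iff_neg_vadd_mem, neg_neg, vadd_eq_add]

theorem exists_add_sub_smul_mem_of_mem_lineal (hs : Convex 𝕜 s) (hx : x ∈ s)
    (hv : v ∈ (feasibleCone 𝕜 s x).lineal) :
    ∃ ε : 𝕜, 0 < ε ∧ x + ε • v ∈ s ∧ x - ε • v ∈ s := by
  obtain ⟨δ₁, hδ₁, h₁⟩ := (mem_feasibleCone_iff hs hx).1 hv.1
  obtain ⟨δ₂, hδ₂, h₂⟩ := (mem_feasibleCone_iff hs hx).1 hv.2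
  have shrink {w : M} {δ ε : 𝕜} (hε : 0 < ε) (hεδ : ε ≤ δ) (hw : x + δ • w ∈ s) :
      x + ε • w ∈ s := by
    have hδ : 0 < δ := hε.trans_le hεδ
    have := hs.add_smul_mem hx hw ⟨(div_pos hε hδ).le, (div_le_one hδ).2 hεδ⟩
    rwa [smul_smul, div_mul_cancel₀ ε hδ.ne'] at this
  have hε : 0 < min δ₁ δ₂ := lt_min hδ₁ hδ₂
  refine ⟨min δ₁ δ₂, hε, shrink hε (min_le_left _ _) h₁, ?_⟩
  simpa only [smul_neg, ← sub_eq_add_neg] using shrink hε (min_le_right _ _) h₂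

variable (𝕜 s x) in
/-- The intersection of `s` with `x - feasibleCone 𝕜 s x`: an explicit form of the face of a convex
set `s` generated by `x ∈ s`, see `genFace_eq_feasibleFace`. -/
def feasibleFace : Set M := {y ∈ s | x - y ∈ feasibleCone 𝕜 s x}

theorem self_mem_feasibleFace (hx : x ∈ s) : x ∈ feasibleFace 𝕜 s x :=
  ⟨hx, sub_mem_feasibleCone hx⟩

theorem convex_feasibleFace (hs : Convex 𝕜 s) : Convex 𝕜 (feasibleFace 𝕜 s x) := by
  rintro y ⟨hy, hxy⟩ z ⟨hz, hxz⟩ a b ha hb hab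
  refine ⟨hs hy hz ha hb hab, ?_⟩
  have hcomb : x - (a • y + b • z) = a • (x - y) + b • (x - z) := by
    obtain rfl : a = 1 - b := eq_sub_of_add_eq hab
    module
  rw [hcomb]
  exact (feasibleCone 𝕜 s x).convex hxy hxz ha hb hab

theorem isExtreme_feasibleFace : IsExtreme 𝕜 s (feasibleFace 𝕜 s x) := by
  refine ⟨fun _ hy ↦ hy.1, ?_⟩
  rintro y hy z hz _ ⟨-, hw⟩ ⟨a, b, ha, hb, hab, rfl⟩
  refine ⟨hy, ?_⟩
  have hcomb : a • (x - y) = (x - (a • y + b • z)) + b • (z - x) := by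
    obtain rfl : a = 1 - b := eq_sub_of_add_eq hab
    module
  rw [← inv_smul_smul₀ ha.ne' (x - y), hcomb]
  exact PointedCone.smul_mem _ (inv_pos.2 ha).le
    (add_mem hw (PointedCone.smul_mem _ hb.le (sub_mem_feasibleCone hz)))

theorem feasibleFace_subset_of_isExtreme (hs : Convex 𝕜 s) (hE : IsExtreme 𝕜 s E) (hx : x ∈ E) :
    feasibleFace 𝕜 s x ⊆ E := by
  rintro y ⟨hy, hxy⟩
  obtain ⟨ε, hε, hu⟩ := (mem_feasibleCone_iff hs (hE.subset hx)).1 hxy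
  have hseg : x ∈ openSegment 𝕜 y (x + ε • (x - y)) := by
    refine mem_openSegment_iff_div.2 ⟨ε, 1, hε, one_pos, ?_⟩
    match_scalars <;> field_simp <;> ring
  exact hE.left_mem_of_mem_openSegment hy hu hx hseg

theorem affineSpan_feasibleFace_le :
    affineSpan 𝕜 (feasibleFace 𝕜 s x) ≤ AffineSubspace.mk' x (feasibleCone 𝕜 s x).lineal := by
  rw [affineSpan_le]
  rintro y ⟨hy, hxy⟩
  rw [SetLike.mem_coe, AffineSubspace.mem_mk', vsub_eq_sub, PointedCone.mem_lineal, neg_sub]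
  exact ⟨sub_mem_feasibleCone hy, hxy⟩

theorem exists_add_sub_smul_mem_feasibleFace (hs : Convex 𝕜 s) (hx : x ∈ s)
    (hv : v ∈ (feasibleCone 𝕜 s x).lineal) :
    ∃ ε : 𝕜, 0 < ε ∧ x + ε • v ∈ feasibleFace 𝕜 s x ∧ x - ε • v ∈ feasibleFace 𝕜 s x := by
  obtain ⟨ε, hε, hadd, hsub⟩ := exists_add_sub_smul_mem_of_mem_lineal hs hx hv
  obtain ⟨hpos, hneg⟩ := PointedCone.mem_lineal.1 (Submodule.smul_mem _ ε hv)
  refine ⟨ε, hε, ⟨hadd, ?_⟩, ⟨hsub, ?_⟩⟩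
  · simpa only [sub_add_cancel_left] using hneg
  · simpa only [sub_sub_cancel] using hpos

end FeasibleCone

section GenFace

variable {K E : Set V} {x : V}

theorem isExtremeSubset_iff_isExtreme : IsExtremeSubset K E ↔ IsExtreme ℝ K E := by
  constructor
  · rintro ⟨hEK, h⟩
    refine ⟨hEK, ?_⟩
    rintro y hy z hz x hx ⟨a, b, ha, hb, hab, hxyz⟩
    obtain rfl : a = 1 - b := eq_sub_of_add_eq hab
    exact (h x hx y hy z hz b ⟨hb, sub_pos.1 ha⟩ hxyz.symm).1
  · intro h
    refine ⟨h.subset, fun x hx y hy z hz l hl hxyz ↦ ?_⟩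
    have hseg : x ∈ openSegment ℝ y z :=
      ⟨1 - l, l, sub_pos.2 hl.2, hl.1, sub_add_cancel 1 l, hxyz.symm⟩
    exact ⟨h.left_mem_of_mem_openSegment hy hz hx hseg,
      h.right_mem_of_mem_openSegment hy hz hx hseg⟩

theorem IsExtremeSubset.sUnion {𝓕 : Set (Set V)} (h𝓕 : ∀ F ∈ 𝓕, IsExtremeSubset K F) :
    IsExtremeSubset K (⋃₀ 𝓕) := by
  refine ⟨Set.sUnion_subset fun F hF ↦ (h𝓕 F hF).1, ?_⟩
  rintro x ⟨F, hF, hx⟩ y hy z hz l hl hxyz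
  obtain ⟨hyF, hzF⟩ := (h𝓕 F hF).2 x hx y hy z hz l hl hxyz
  exact ⟨⟨F, hF, hyF⟩, ⟨F, hF, hzF⟩⟩

theorem isFaceOf_feasibleFace (hK : Convex ℝ K) : IsFaceOf K (feasibleFace ℝ K x) :=
  ⟨convex_feasibleFace hK, isExtremeSubset_iff_isExtreme.2 isExtreme_feasibleFace⟩

theorem IsExtremeSubset.feasibleFace_subset (hK : Convex ℝ K) (hE : IsExtremeSubset K E)
    (hx : x ∈ E) : feasibleFace ℝ K x ⊆ E :=
  feasibleFace_subset_of_isExtreme hK (isExtremeSubset_iff_isExtreme.1 hE) hx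

theorem genFace_eq_feasibleFace (hK : Convex ℝ K) (hx : x ∈ K) :
    genFace K x = feasibleFace ℝ K x :=
  Set.Subset.antisymm
    (Set.sInter_subset_of_mem ⟨isFaceOf_feasibleFace hK, self_mem_feasibleFace hx⟩)
    (Set.subset_sInter fun _ hF ↦ hF.1.2.feasibleFace_subset hK hF.2)

theorem isFaceOf_genFace (hK : Convex ℝ K) (hx : x ∈ K) : IsFaceOf K (genFace K x) :=
  genFace_eq_feasibleFace hK hx ▸ isFaceOf_feasibleFace hK

theorem IsExtremeSubset.genFace_subset (hK : Convex ℝ K) (hE : IsExtremeSubset K E) (hx : x ∈ E) :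
    genFace K x ⊆ E :=
  genFace_eq_feasibleFace hK (hE.1 hx) ▸ hE.feasibleFace_subset hK hx

theorem mem_riSet_genFace (hK : Convex ℝ K) (hx : x ∈ K) : x ∈ riSet (genFace K x) := by
  rw [genFace_eq_feasibleFace hK hx]
  refine ⟨self_mem_feasibleFace hx, fun y hy ↦ ?_⟩
  have hyx : y - x ∈ (feasibleCone ℝ K x).lineal :=
    AffineSubspace.mem_mk'.1 (affineSpan_feasibleFace_le hy)
  exact exists_add_sub_smul_mem_feasibleFace hK hx hyx

theorem eq_sUnion_image_genFace (h : ∀ x ∈ E, genFace K x ⊆ E) : E = ⋃₀ (genFace K '' E) :=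
  Set.Subset.antisymm
    (fun x hx ↦ ⟨genFace K x, Set.mem_image_of_mem _ hx, Set.mem_sInter.2 fun _ hF ↦ hF.2⟩)
    (Set.sUnion_subset (Set.forall_mem_image.2 h))

end GenFace

theorem stmt5 (K E : Set V) (hK : Convex ℝ K) (hE : E ⊆ K) :
    (IsExtremeSubset K E ↔ ∀ x ∈ E, genFace K x ⊆ E) ∧
    ((∀ x ∈ E, genFace K x ⊆ E) ↔
      ∃ 𝓕 : Set (Set V), (∀ F ∈ 𝓕, IsFaceOf K F ∧ (riSet F).Nonempty) ∧ E = ⋃₀ 𝓕) ∧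
    ((∃ 𝓕 : Set (Set V), (∀ F ∈ 𝓕, IsFaceOf K F ∧ (riSet F).Nonempty) ∧ E = ⋃₀ 𝓕) ↔
      ∃ 𝓕 : Set (Set V), (∀ F ∈ 𝓕, IsFaceOf K F) ∧ E = ⋃₀ 𝓕) := by
  have h12 : IsExtremeSubset K E → ∀ x ∈ E, genFace K x ⊆ E :=
    fun h _ hx ↦ h.genFace_subset hK hx
  have h23 : (∀ x ∈ E, genFace K x ⊆ E) →
      ∃ 𝓕 : Set (Set V), (∀ F ∈ 𝓕, IsFaceOf K F ∧ (riSet F).Nonempty) ∧ E = ⋃₀ 𝓕 :=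
    fun h ↦ ⟨genFace K '' E, Set.forall_mem_image.2 fun x hx ↦
      ⟨isFaceOf_genFace hK (hE hx), x, mem_riSet_genFace hK (hE hx)⟩, eq_sUnion_image_genFace h⟩
  have h34 : (∃ 𝓕 : Set (Set V), (∀ F ∈ 𝓕, IsFaceOf K F ∧ (riSet F).Nonempty) ∧ E = ⋃₀ 𝓕) →
      ∃ 𝓕 : Set (Set V), (∀ F ∈ 𝓕, IsFaceOf K F) ∧ E = ⋃₀ 𝓕 :=
    fun ⟨𝓕, h𝓕, hE𝓕⟩ ↦ ⟨𝓕, fun F hF ↦ (h𝓕 F hF).1, hE𝓕⟩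
  have h41 : (∃ 𝓕 : Set (Set V), (∀ F ∈ 𝓕, IsFaceOf K F) ∧ E = ⋃₀ 𝓕) → IsExtremeSubset K E :=
    fun ⟨_, h𝓕, hE𝓕⟩ ↦ hE𝓕 ▸ .sUnion fun F hF ↦ (h𝓕 F hF).2
  exact ⟨⟨h12, h41 ∘ h34 ∘ h23⟩, ⟨h23, h12 ∘ h41 ∘ h34⟩, ⟨h34, h23 ∘ h12 ∘ h41⟩⟩
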